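/- arXiv:1806.05828 — 2 statements merged into one kernel-verified Lean document; each statement's English description precedes it below -/
import Mathlib

section
/- Let X be a topological space and f : X → X a map that is continuous, closed (images of closed sets are closed) and surjective. Let Z ⊆ X be a closed subset that is the union of its finitely many irreducible components Z₁, …, Zₙ, and suppose f^{-s}(Z) = Z for some integer s ≥ 1. Then the map sending an irreducible component Zᵢ of Z to f^s(Zᵢ) is a well-defined permutation of the set {Z₁, …, Zₙ} of irreducible components of Z; in particular, f^{s·n!}(Zᵢ) = Zᵢ for every i. -/
/-- `T` is an irreducible component of the subset `Z` of a topological space: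
`T` is a maximal element among the irreducible subsets of `Z` (irreducibility of a subset is
intrinsic, so this agrees with the notion of irreducible component of `Z` with its subspace
topology). -/
def IsIrreducibleComponentOf {X : Type*} [TopologicalSpace X] (T Z : Set X) : Prop :=
  Maximal (fun t : Set X => t ⊆ Z ∧ IsIrreducible t) T

/-- Let `X` be a topological space and `f : X → X` a continuous, closed and
surjective map.  Let `Z ⊆ X` be a closed subset which is the union of its finitely many
irreducible components, and suppose `f^{-s}(Z) = Z` for some integer `s ≥ 1`.  Then
`T ↦ f^s(T)` is a well-defined permutation of the (finite) set of irreducible components of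
`Z`; in particular `f^{s·n!}(T) = T` for every irreducible component `T` of `Z`, where `n` is
the number of irreducible components of `Z`. -/
theorem image_permutes_irreducible_components
    {X : Type*} [TopologicalSpace X] (f : X → X)
    (hcont : Continuous f) (hclosed : IsClosedMap f) (hsurj : Function.Surjective f)
    (Z : Set X) (hZ : IsClosed Z)
    (hfin : {T : Set X | IsIrreducibleComponentOf T Z}.Finite)
    (hunion : Z = ⋃₀ {T : Set X | IsIrreducibleComponentOf T Z})
    (s : ℕ) (hs : 1 ≤ s) (hper : f^[s] ⁻¹' Z = Z) :
    (∀ T : Set X, IsIrreducibleComponentOf T Z →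
        IsIrreducibleComponentOf (f^[s] '' T) Z) ∧
    Set.BijOn (fun T : Set X => f^[s] '' T)
      {T : Set X | IsIrreducibleComponentOf T Z}
      {T : Set X | IsIrreducibleComponentOf T Z} ∧
    (∀ T : Set X, IsIrreducibleComponentOf T Z →
        f^[s * Nat.factorial hfin.toFinset.card] '' T = T) := by
  classical
  have gc : Continuous f^[s] := hcont.iterate s
  have gcl : IsClosedMap f^[s] := by
    clear hs hper
    induction s with
    | zero => exact IsClosedMap.id
    | succ k ih =>
      rw [Function.iterate_succ]
      exact (ih (hcont.iterate k)).comp hclosed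
  have gs : Function.Surjective f^[s] := hsurj.iterate s
  rw [Function.iterate_mul]
  generalize f^[s] = g at *
  set C : Set (Set X) := {T : Set X | IsIrreducibleComponentOf T Z} with hC
  have hgZ : g '' Z = Z := by
    conv_lhs => rw [← hper]
    exact Set.image_preimage_eq Z gs
  have hCclosed : ∀ T ∈ C, IsClosed T := by
    intro T hT
    have h1 : closure T ⊆ T := hT.2
      ⟨closure_minimal hT.1.1 hZ, isIrreducible_iff_closure.2 hT.1.2⟩ subset_closure
    exact isClosed_of_closure_subset h1
  have hsub : C ⊆ (fun T : Set X => g '' T) '' C := by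
    intro T hT
    have hfi : ((fun T : Set X => g '' T) '' C).Finite := hfin.image _
    obtain ⟨U, hU, hTU⟩ := isIrreducible_iff_sUnion_isClosed.1 hT.1.2 hfi.toFinset
      (by
        intro z hz
        rw [Set.Finite.mem_toFinset] at hz
        obtain ⟨S, hS, rfl⟩ := hz
        exact gcl _ (hCclosed S hS))
      (by
        intro x hx
        have hxZ : x ∈ g '' Z := hgZ.symm ▸ hT.1.1 hx
        obtain ⟨y, hy, rfl⟩ := hxZ
        rw [hunion] at hy
        obtain ⟨S, hS, hyS⟩ := hy
        refine ⟨g '' S, ?_, y, hyS, rfl⟩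
        rw [Set.Finite.coe_toFinset]
        exact ⟨S, hS, rfl⟩)
    rw [Set.Finite.mem_toFinset] at hU
    obtain ⟨S, hS, rfl⟩ := hU
    refine ⟨S, hS, Set.Subset.antisymm (hT.2 ⟨?_, ?_⟩ hTU) hTU⟩
    · exact (Set.image_mono hS.1.1).trans hgZ.subset
    · exact hS.1.2.image g gc.continuousOn
  have heq : C = (fun T : Set X => g '' T) '' C :=
    Set.eq_of_subset_of_ncard_le hsub (Set.ncard_image_le hfin) (hfin.image _)
  have hbij : Set.BijOn (fun T : Set X => g '' T) C C := by
    refine ⟨?_, ?_, hsub⟩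
    · intro T hT
      rw [heq]
      exact ⟨T, hT, rfl⟩
    · exact Set.injOn_of_ncard_image_eq (by rw [← heq]) hfin
  refine ⟨fun T hT => hbij.mapsTo hT, hbij, fun T hT => ?_⟩
  have : Fintype C := hfin.fintype
  have hcard : Fintype.card (Equiv.Perm C) = Nat.factorial hfin.toFinset.card := by
    rw [Fintype.card_perm, Set.Finite.card_toFinset]
  let e : Equiv.Perm C := hbij.equiv
  have he : ∀ (k : ℕ) (S : C), ((e ^ k) S : Set X) = g^[k] '' (S : Set X) := by
    intro k
    induction k with
    | zero => intro S; simp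
    | succ k ih =>
      intro S
      rw [pow_succ, Equiv.Perm.mul_apply, ih, Function.iterate_succ, Set.image_comp]
      rfl
  have := he (Nat.factorial hfin.toFinset.card) ⟨T, hT⟩
  rw [← this, ← hcard, pow_card_eq_one]
  rfl
end

section
/- Let f : X → Y be a finite surjective morphism of varieties over an algebraically closed field, with Y normal. Then f is an open map: the image under f of every Zariski-open subset of X is open in Y. -/
open AlgebraicGeometry CategoryTheory

theorem fs_open_affine {R S : CommRingCat.{0}} [IsDomain R] [IsDomain S] [IsNoetherianRing R]
    (φ : R ⟶ S) (hφ : φ.hom.Finite)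
    (hn : ∀ y : Spec R, IsIntegrallyClosed ((Spec R).presheaf.stalk y))
    (hs : Function.Surjective (Spec.map φ)) : IsOpenMap (Spec.map φ) := by
  have hR : IsIntegrallyClosed R := by
    apply IsIntegrallyClosed.of_localization_maximal
    intro P _ hP
    have := hn ⟨P, inferInstance⟩
    exact IsIntegrallyClosed.of_equiv (Spec.stalkIso R ⟨P, inferInstance⟩).commRingCatIsoToRingEquiv
  algebraize [φ.hom]
  have hinj : Function.Injective (algebraMap R S) := by
    obtain ⟨Q, hQ⟩ := hs (⟨⊥, Ideal.isPrime_bot⟩ : PrimeSpectrum R)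
    rw [injective_iff_map_eq_zero]
    intro a ha
    have h1 : a ∈ ((Spec.map φ) Q).asIdeal := by
      change φ.hom a ∈ Q.asIdeal
      have : φ.hom a = 0 := ha
      rw [this]
      exact Q.asIdeal.zero_mem
    rw [hQ] at h1
    exact h1
  have : FaithfulSMul R S := (faithfulSMul_iff_algebraMap_injective R S).mpr hinj
  have : Algebra.FinitePresentation R S := Algebra.FinitePresentation.of_finiteType.mp inferInstance
  exact PrimeSpectrum.isOpenMap_comap_of_hasGoingDown_of_finitePresentation (R := R) (S := S)

theorem fs_open_spec {X : Scheme.{0}} {R : CommRingCat.{0}} [IsIntegral X] [IsIntegral (Spec R)]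
    [IsLocallyNoetherian (Spec R)] (f : X ⟶ Spec R) [IsFinite f]
    (hn : ∀ y : Spec R, IsIntegrallyClosed ((Spec R).presheaf.stalk y))
    (hs : Function.Surjective f) : IsOpenMap f := by
  have : IsAffine X := isAffine_of_isAffineHom f
  have : IsDomain R := (affine_isIntegral_iff R).mp inferInstance
  have : IsNoetherianRing R := isLocallyNoetherian_Spec.mp inferInstance
  obtain ⟨φ, hφ⟩ := Spec.map_surjective (X.isoSpec.inv ≫ f)
  have hfin : IsFinite (Spec.map φ) := by rw [hφ]; infer_instance
  have ho : IsOpenMap (Spec.map φ) := by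
    apply fs_open_affine φ ((IsFinite.SpecMap_iff φ).mp hfin) hn
    rw [hφ, Scheme.Hom.comp_base]
    exact hs.comp X.isoSpec.inv.homeomorph.surjective
  have : f = X.isoSpec.hom ≫ Spec.map φ := by rw [hφ]; simp
  rw [this, Scheme.Hom.comp_base]
  exact ho.comp X.isoSpec.hom.homeomorph.isOpenMap

theorem fs_open_general {X Y : Scheme.{0}} [IsIntegral X] [IsIntegral Y] [IsLocallyNoetherian Y]
    (f : X ⟶ Y) [IsFinite f]
    (hn : ∀ y : Y, IsIntegrallyClosed (Y.presheaf.stalk y))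
    (hs : Function.Surjective f) : IsOpenMap f := by
  change topologically @IsOpenMap f
  have : Surjective f := ⟨hs⟩
  rw [IsZariskiLocalAtTarget.iff_of_openCover (P := topologically @IsOpenMap) Y.affineCover]
  intro i
  dsimp only [Scheme.Cover.pullbackHom]
  rcases isEmpty_or_nonempty (Y.affineCover.X i) with he | hne
  · intro s _
    rw [Set.eq_empty_of_isEmpty (Set.image _ s)]
    exact isOpen_empty
  have hi : IsIntegral (Y.affineCover.X i) := isIntegral_of_isOpenImmersion (Y.affineCover.f i)
  have hln : IsLocallyNoetherian (Y.affineCover.X i) := inferInstance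
  have hsur : Surjective (Limits.pullback.snd f (Y.affineCover.f i)) := inferInstance
  have hne' : Nonempty ↥(Limits.pullback f (Y.affineCover.f i)) := by
    obtain ⟨z⟩ := hne
    obtain ⟨w, -⟩ := hsur.surj z
    exact ⟨w⟩
  have hi' : IsIntegral (Limits.pullback f (Y.affineCover.f i)) :=
    isIntegral_of_isOpenImmersion (Limits.pullback.fst f (Y.affineCover.f i))
  have hfin : IsFinite (Limits.pullback.snd f (Y.affineCover.f i)) := inferInstance
  have hn' : ∀ y : Y.affineCover.X i,
      IsIntegrallyClosed ((Y.affineCover.X i).presheaf.stalk y) := by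
    intro y
    have := hn ((Y.affineCover.f i) y)
    exact IsIntegrallyClosed.of_equiv
      (asIso ((Y.affineCover.f i).stalkMap y)).commRingCatIsoToRingEquiv
  exact @fs_open_spec _ _ hi' hi hln (Limits.pullback.snd f (Y.affineCover.f i)) hfin
    hn' hsur.surj

/-- Let `f : X → Y` be a finite surjective morphism of varieties over an
algebraically closed field `k` (a variety being an integral scheme, separated and of finite
type over `Spec k`), with `Y` normal (every stalk of the structure sheaf of `Y` is an
integrally closed domain; stalks of an integral scheme are automatically domains).  Then `f`
is an open map: the image under `f` of every Zariski-open subset of `X` is open in `Y`. -/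
theorem finite_surjective_onto_normal_is_open
    {k : Type} [Field k] [IsAlgClosed k]
    (X Y : Scheme) [IsIntegral X] [IsIntegral Y]
    (pX : X ⟶ Spec (CommRingCat.of k)) (pY : Y ⟶ Spec (CommRingCat.of k))
    [IsSeparated pX] [LocallyOfFiniteType pX] [QuasiCompact pX]
    [IsSeparated pY] [LocallyOfFiniteType pY] [QuasiCompact pY]
    (hYnormal : ∀ y : Y, IsIntegrallyClosed (Y.presheaf.stalk y))
    (f : X ⟶ Y) [IsFinite f] (hf : Function.Surjective f.base)
    (hfk : f ≫ pY = pX) :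
    IsOpenMap f.base := by
  have : IsLocallyNoetherian (Spec (CommRingCat.of k)) := inferInstance
  have : IsLocallyNoetherian Y := LocallyOfFiniteType.isLocallyNoetherian pY
  exact fs_open_general f hYnormal hf
end
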